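/- Let H be an arbitrary abelian group and let κ > 2^(2^𝔠), where 𝔠 = 2^{ℵ₀} is the cardinality of the continuum. If f : {0} ∪ [κ]^4 → H^# is a continuous map, where {0} ∪ [κ]^4 ⊆ B_κ carries the topology induced from B_κ^#, then there exists an infinite S ⊆ κ such that f is linear on {0} ∪ [S]^4. -/

import Mathlib

open scoped Pointwise

/-- The Bohr topology on an abelian group `G`: the initial topology induced by the
family of all group homomorphisms from `G` to the circle group `ℝ/ℤ`. -/
noncomputable def bohrTopology (G : Type*) [AddCommGroup G] : TopologicalSpace G :=
  ⨅ χ : G →+ AddCircle (1 : ℝ), TopologicalSpace.induced χ inferInstance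

/-- The set `{0} ∪ [S]⁴` inside the Boolean group `B_κ = ⊕_κ ℤ/2ℤ`. -/
def zeroUnionQuadruples {κ : Type*} (S : Set κ) : Set (κ →₀ ZMod 2) :=
  {x | x = 0 ∨ (x.support.card = 4 ∧ ↑x.support ⊆ S)}

/-!
Embed `H` into a direct sum of copies of the countable group `ℚ × ℚ/ℤ`. By the Erdős–Rado theorem
there is an infinite set on whose `r`-subsets the value of `f - f 0` has the form
`∑ j, single (D s j) (d j)` with fixed nonzero coefficients `d j`; by Ramsey's theorem the
coincidences among the labels `D s j` may be assumed to depend only on the relative position of the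
tuples. Continuity at `0` says that for every character `χ` and every neighbourhood of `0` some
finite colouring forces `χ (f s - f 0)` into the neighbourhood as soon as every colour occurs an
even number of times in `s`. Characters supported on suitable sets of labels then show that each
label `D s j` depends on exactly one entry of `s`, so `f s - f 0 = ∑ p, g p (s p)`, and that
`g p x + g q x = 0` for `p ≠ q`. With at least three positions, all `g p x` equal one element of
order at most two, and `f - f 0` is additive.
-/

section Embedding

theorem sSupIndep_insert_of_disjoint_sSup {α : Type*} [CompleteLattice α] [IsModularLattice α]
    {s : Set α} {a : α} (hs : sSupIndep s) (ha : Disjoint a (sSup s)) :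
    sSupIndep (insert a s) := by
  intro b hb
  obtain rfl | hba := eq_or_ne b a
  · exact ha.mono_right (sSup_le_sSup (by simp))
  have hbs : b ∈ s := hb.resolve_left hba
  rw [Set.insert_sdiff_of_notMem s (by simpa using hba.symm), sSup_insert, sup_comm]
  refine (hs hbs).disjoint_sup_right_of_disjoint_sup_left (ha.mono_right ?_).symm
  exact sup_le (le_sSup hbs) (sSup_le_sSup Set.sdiff_subset)

theorem exists_sSupIndep_cyclic_essential (R M : Type*) [Ring R] [AddCommGroup M] [Module R M] :
    ∃ s : Set (Submodule R M), sSupIndep s ∧ (∀ N ∈ s, ∃ x, N = R ∙ x) ∧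
      ∀ N, Disjoint N (sSup s) → N = ⊥ := by
  obtain ⟨s, ⟨hs, hcyc⟩, hmax⟩ :=
    zorn_subset {s : Set (Submodule R M) | sSupIndep s ∧ ∀ N ∈ s, ∃ x, N = R ∙ x}
      fun c hc hchain => ⟨⋃₀ c,
        ⟨iSupIndep_sUnion_of_directed hchain.directedOn fun s hs => (hc hs).1,
          fun N ⟨s, hsc, hN⟩ => (hc hsc).2 N hN⟩,
        fun _ => Set.subset_sUnion_of_mem⟩
  refine ⟨s, hs, hcyc, fun N hN => (Submodule.eq_bot_iff N).2 fun x hx => ?_⟩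
  have hdisj : Disjoint (R ∙ x) (sSup s) :=
    hN.mono_left ((Submodule.span_singleton_le_iff_mem x N).2 hx)
  have hmem : (R ∙ x) ∈ s :=
    hmax ⟨sSupIndep_insert_of_disjoint_sSup hs hdisj,
      Set.forall_mem_insert.2 ⟨⟨x, rfl⟩, hcyc⟩⟩ (Set.subset_insert _ _) (Set.mem_insert _ _)
  exact Submodule.span_singleton_eq_bot.1 (hdisj.eq_bot_of_le (le_sSup hmem))

theorem exists_injective_finsupp_of_baer {R M A ι : Type*} [Ring R] [AddCommGroup M] [Module R M]
    [AddCommGroup A] [Module R A] (hA : Module.Baer R (ι →₀ A)) {p : ι → Submodule R M}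
    (hp : iSupIndep p) (hess : ∀ N, Disjoint N (⨆ i, p i) → N = ⊥)
    (g : ∀ i, p i →ₗ[R] A) (hg : ∀ i, Function.Injective (g i)) :
    ∃ θ : M →ₗ[R] (ι →₀ A), Function.Injective θ := by
  classical
  let incl : (Π₀ i, p i) →ₗ[R] M := DFinsupp.lsum ℕ fun i => (p i).subtype
  let G : (Π₀ i, p i) →ₗ[R] (ι →₀ A) :=
    (finsuppLequivDFinsupp R).symm.toLinearMap ∘ₗ DFinsupp.mapRange.linearMap g
  have hG : Function.Injective G :=
    (finsuppLequivDFinsupp R).symm.injective.comp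
      ((DFinsupp.mapRange_injective _ fun i => map_zero (g i)).2 hg)
  obtain ⟨θ, hθ⟩ := hA.extension_property incl hp.dfinsupp_lsum_injective G
  refine ⟨θ, LinearMap.ker_eq_bot.1 (hess _ ?_)⟩
  rw [Submodule.disjoint_def, Submodule.iSup_eq_range_dfinsupp_lsum]
  rintro _ hx ⟨m, rfl⟩
  have hGm : G m = 0 := (LinearMap.congr_fun hθ m).symm.trans hx
  rw [(injective_iff_map_eq_zero G).1 hG m hGm, map_zero]

instance countable_addCircle {A : Type*} [AddCommGroup A] [Countable A] (p : A) :
    Countable (AddCircle p) :=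
  (QuotientAddGroup.mk_surjective (s := AddSubgroup.zmultiples p)).countable

theorem exists_addOrderOf_eq_rat_prod_addCircle (n : ℕ) :
    ∃ q : ℚ × AddCircle (1 : ℚ), addOrderOf q = n := by
  obtain rfl | hn := n.eq_zero_or_pos
  · exact ⟨(1, 0), by simp [Prod.addOrderOf_mk, not_isOfFinAddOrder_of_isAddTorsionFree]⟩
  · exact ⟨(0, ((1 / n : ℚ) : AddCircle (1 : ℚ))), by
      simp [Prod.addOrderOf_mk, -one_div, AddCircle.addOrderOf_period_div hn]⟩

theorem exists_injective_span_singleton_rat_prod_addCircle {H : Type*} [AddCommGroup H] (x : H) :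
    ∃ g : (ℤ ∙ x) →ₗ[ℤ] ℚ × AddCircle (1 : ℚ), Function.Injective g := by
  obtain ⟨q, hq⟩ := exists_addOrderOf_eq_rat_prod_addCircle (addOrderOf x)
  let e : (ℤ ∙ x) ≃ₗ[ℤ] (ℤ ∙ q) :=
    CharacterModule.intSpanEquivQuotAddOrderOf x ≪≫ₗ
      Submodule.quotEquivOfEq _ _ (by rw [hq]) ≪≫ₗ
      (CharacterModule.intSpanEquivQuotAddOrderOf q).symm
  exact ⟨(ℤ ∙ q).subtype ∘ₗ e.toLinearMap, (Submodule.subtype_injective _).comp e.injective⟩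

theorem baer_finsupp_of_divisibleBy (I A : Type*) [AddCommGroup A] [DivisibleBy A ℤ] :
    Module.Baer ℤ (I →₀ A) := by
  have hsurj : ∀ {n : ℤ}, n ≠ 0 → Function.Surjective fun a : I →₀ A => n • a := fun {n} hn =>
    Finsupp.mapRange_surjective (n • ·) (smul_zero n) (DivisibleBy.surjective_smul A ℤ hn)
  let _ := divisibleByOfSMulRightSurj (I →₀ A) ℤ hsurj
  exact Module.Baer.of_divisible _

theorem exists_injective_finsupp_rat_prod_addCircle (H : Type*) [AddCommGroup H] :
    ∃ (I : Set (Submodule ℤ H)) (θ : H →+ (I →₀ ℚ × AddCircle (1 : ℚ))),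
      Function.Injective θ := by
  obtain ⟨I, hI, hcyc, hess⟩ := exists_sSupIndep_cyclic_essential ℤ H
  have hg : ∀ N : I, ∃ g : N.1 →ₗ[ℤ] ℚ × AddCircle (1 : ℚ), Function.Injective g := by
    rintro ⟨N, hN⟩
    obtain ⟨x, rfl⟩ := hcyc N hN
    exact exists_injective_span_singleton_rat_prod_addCircle x
  choose g hg using hg
  obtain ⟨θ, hθ⟩ := exists_injective_finsupp_of_baer (baer_finsupp_of_divisibleBy I _)
    (sSupIndep_iff I |>.1 hI) (by simpa only [← sSup_eq_iSup'] using hess) g hg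
  exact ⟨I, θ.toAddMonoidHom, hθ⟩

theorem exists_injective_addCircle_rat_real :
    ∃ φ : AddCircle (1 : ℚ) →+ AddCircle (1 : ℝ), Function.Injective φ := by
  have hmem (y : ℚ) : (y : ℝ) ∈ AddSubgroup.zmultiples (1 : ℝ) ↔
      y ∈ AddSubgroup.zmultiples (1 : ℚ) := by
    simp only [AddSubgroup.mem_zmultiples_iff, zsmul_eq_mul, mul_one]
    norm_cast
  refine ⟨QuotientAddGroup.map _ _ (Rat.castHom ℝ).toAddMonoidHom fun y hy => (hmem y).2 hy,
    (injective_iff_map_eq_zero _).2 fun x => ?_⟩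
  obtain ⟨y, rfl⟩ := QuotientAddGroup.mk_surjective x
  intro hy
  exact (QuotientAddGroup.eq_zero_iff y).2 ((hmem y).1 ((QuotientAddGroup.eq_zero_iff _).1 hy))

theorem exists_addMonoidHom_addCircle_ne_zero {A : Type*} [AddCommGroup A] {a : A} (ha : a ≠ 0) :
    ∃ χ : A →+ AddCircle (1 : ℝ), χ a ≠ 0 := by
  obtain ⟨c, hc⟩ := CharacterModule.exists_character_apply_ne_zero_of_ne_zero ha
  obtain ⟨φ, hφ⟩ := exists_injective_addCircle_rat_real
  exact ⟨φ.comp c, (map_ne_zero_iff φ hφ).2 hc⟩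

end Embedding

section PartitionCalculus

universe u

open Cardinal

variable {X C W : Type*}

/-- `Y` is homogeneous in exponent `n` for the colouring `f` of finite sets: all `n`-element
subsets of `Y` have the same colour. -/
def IsHomogeneous (f : Finset X → C) (n : ℕ) (Y : Set X) : Prop :=
  ∀ s t : Finset X, ↑s ⊆ Y → ↑t ⊆ Y → s.card = n → t.card = n → f s = f t

open Classical in
/-- The sequence `y` is injective and end-homogeneous for the colouring `f`: the colour of a
nonempty finite set of its terms depends only on the set `T` of all terms but the last one,
and is equal to `g T`. -/
structure IsEndHomogeneous [Preorder W] (f g : Finset X → C) (y : W → X) : Prop where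
  notMem_image_Iio (ξ : W) : y ξ ∉ y '' Set.Iio ξ
  color_insert (ξ : W) (T : Finset X) : ↑T ⊆ y '' Set.Iio ξ → f (insert (y ξ) T) = g T

theorem IsEndHomogeneous.injective [LinearOrder W] {f g : Finset X → C} {y : W → X}
    (h : IsEndHomogeneous f g y) : Function.Injective y :=
  Function.Injective.of_lt_imp_ne fun ξ η hlt heq => h.notMem_image_Iio η ⟨ξ, hlt, heq⟩

theorem IsEndHomogeneous.isHomogeneous_image [LinearOrder W] {f g : Finset X → C} {y : W → X}
    (h : IsEndHomogeneous f g y) {n : ℕ} {Y : Set W}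
    (hY : IsHomogeneous (fun t => g (t.map ⟨y, h.injective⟩)) n Y) :
    IsHomogeneous f (n + 1) (y '' Y) := by
  classical
  have remove_last (s : Finset X) (hs : ↑s ⊆ y '' Y) (hcard : s.card = n + 1) :
      ∃ t : Finset W, ↑t ⊆ Y ∧ t.card = n ∧ f s = g (t.map ⟨y, h.injective⟩) := by
    obtain ⟨u, huY, rfl⟩ := Finset.subset_set_image_iff.1 hs
    rw [Finset.card_image_of_injective _ h.injective] at hcard
    have hne : u.Nonempty := Finset.card_pos.1 (by omega)
    have hmax := u.max'_mem hne
    refine ⟨u.erase (u.max' hne), (Finset.coe_subset.2 (Finset.erase_subset _ _)).trans huY, ?_, ?_⟩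
    · rw [Finset.card_erase_of_mem hmax, hcard, Nat.add_sub_cancel]
    · rw [Finset.map_eq_image, Function.Embedding.coeFn_mk, ← h.color_insert (u.max' hne),
        ← Finset.image_insert, Finset.insert_erase hmax]
      rw [Finset.coe_image]
      exact Set.image_mono fun η hη => Finset.lt_max'_of_mem_erase_max' _ _ hη
  intro s s' hs hs' hcard hcard'
  obtain ⟨t, htY, ht, hft⟩ := remove_last s hs hcard
  obtain ⟨t', htY', ht', hft'⟩ := remove_last s' hs' hcard'
  rw [hft, hft']
  exact hY t t' htY htY' ht ht'

theorem exists_forall_eq_image_Iio [Preorder W] [WellFoundedLT W] (step : Set X → X) :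
    ∃ y : W → X, ∀ ξ, y ξ = step (y '' Set.Iio ξ) := by
  refine ⟨wellFounded_lt.fix fun ξ y => step (Set.range fun η : Set.Iio ξ => y η η.2), fun ξ => ?_⟩
  rw [WellFounded.fix_eq, Set.image_eq_range]

open Classical in
theorem exists_isEndHomogeneous_nat [Infinite X] [Finite C] (f : Finset X → C) :
    ∃ (g : Finset X → C) (y : ℕ → X), IsEndHomogeneous f g y := by
  have limit_color (T : Finset X) : ∃ c, ∀ᶠ z in Filter.hyperfilter X, f (insert z T) = c :=
    Ultrafilter.eventually_exists_iff.1 (.of_forall fun z => ⟨_, rfl⟩)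
  choose g hg using limit_color
  have extend_finite (P : Set X) (hP : P.Finite) :
      ∃ z, z ∉ P ∧ ∀ T : Finset X, ↑T ⊆ P → f (insert z T) = g T := by
    have hfresh : ∀ᶠ z in Filter.hyperfilter X, z ∉ P := Filter.compl_mem_hyperfilter_of_finite hP
    have hlimit : ∀ᶠ z in Filter.hyperfilter X,
        ∀ T ∈ hP.toFinset.powerset, f (insert z T) = g T :=
      (Filter.eventually_all_finset _).2 fun T _ => hg T
    obtain ⟨z, hz, hzg⟩ := (hfresh.and hlimit).exists
    exact ⟨z, hz, fun T hT => hzg T (by simpa [Set.Finite.subset_toFinset] using hT)⟩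
  choose! step hstep hcolor using extend_finite
  obtain ⟨y, hy⟩ := exists_forall_eq_image_Iio (W := ℕ) step
  have hfin (n : ℕ) : (y '' Set.Iio n).Finite := (Set.finite_Iio n).image y
  exact ⟨g, y, fun n => hy n ▸ hstep _ (hfin n), fun n => hy n ▸ hcolor _ (hfin n)⟩

theorem exists_infinite_isHomogeneous_nat [Finite C] (f : Finset ℕ → C) (n : ℕ) :
    ∃ Y : Set ℕ, Y.Infinite ∧ IsHomogeneous f n Y := by
  classical
  induction n generalizing f with
  | zero =>
    refine ⟨Set.univ, Set.infinite_univ, fun s t _ _ hs ht => ?_⟩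
    rw [Finset.card_eq_zero.1 hs, Finset.card_eq_zero.1 ht]
  | succ n ih =>
    obtain ⟨g, y, hy⟩ := exists_isEndHomogeneous_nat f
    obtain ⟨Y, hYinf, hY⟩ := ih fun t => g (t.map ⟨y, hy.injective⟩)
    exact ⟨y '' Y, hYinf.image hy.injective.injOn, hy.isHomogeneous_image hY⟩

open Classical in
/-- The points `z` outside `P` that the colouring `f` cannot distinguish from `x` over `P`:
the admissible next terms of an end-homogeneous sequence with set of terms `P` following the
colours of `x`. -/
def similarOver (f : Finset X → C) (x : X) (P : Set X) : Set X :=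
  {z | z ∉ P ∧ ∀ T : Finset X, ↑T ⊆ P → f (insert z T) = f (insert x T)}

theorem mem_similarOver_self {f : Finset X → C} {x : X} {P : Set X} (hx : x ∉ P) :
    x ∈ similarOver f x P := ⟨hx, fun _ _ => rfl⟩

section TreeBranches

variable [Preorder W] [Nonempty X] {f : Finset X → C} {x x' : X} {y y' : W → X}

open Classical in
theorem isEndHomogeneous_of_forall_ne
    (hy : ∀ ξ, y ξ = Classical.epsilon (· ∈ similarOver f x (y '' Set.Iio ξ)))
    (hx : ∀ ξ, y ξ ≠ x) : IsEndHomogeneous f (fun T => f (insert x T)) y := by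
  have hmem (ξ : W) : y ξ ∈ similarOver f x (y '' Set.Iio ξ) := by
    have hx_mem : x ∈ similarOver f x (y '' Set.Iio ξ) :=
      mem_similarOver_self fun ⟨η, _, hη⟩ => hx η hη
    rw [hy]
    exact Classical.epsilon_spec (p := (· ∈ similarOver f x (y '' Set.Iio ξ))) ⟨x, hx_mem⟩
  exact ⟨fun ξ => (hmem ξ).1, fun ξ => (hmem ξ).2⟩

open Classical in
theorem eqOn_Iic_of_color_insert_eq [WellFoundedLT W]
    (hy : ∀ ξ, y ξ = Classical.epsilon (· ∈ similarOver f x (y '' Set.Iio ξ)))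
    (hy' : ∀ ξ, y' ξ = Classical.epsilon (· ∈ similarOver f x' (y' '' Set.Iio ξ))) {ξ : W}
    (hcolor : ∀ t : Finset (Set.Iio ξ),
      f (insert x (t.image fun η : Set.Iio ξ => y η)) =
        f (insert x' (t.image fun η : Set.Iio ξ => y' η))) :
    Set.EqOn y y' (Set.Iic ξ) := by
  intro η
  induction η using WellFoundedLT.induction with
  | ind η ih =>
    intro (hη : η ≤ ξ)
    have hIio : Set.EqOn y y' (Set.Iio η) := fun ζ hζ => ih ζ hζ (hζ.le.trans hη)
    have hsimilar : similarOver f x (y '' Set.Iio η) = similarOver f x' (y '' Set.Iio η) := by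
      refine Set.ext fun z => and_congr_right fun _ => forall₂_congr fun T hT => ?_
      obtain ⟨t, ht, rfl⟩ := Finset.subset_set_image_iff.1 hT
      have himage (w : W → X) :
          (t.subtype (· ∈ Set.Iio ξ)).image (fun ζ : Set.Iio ξ => w ζ) = t.image w := by
        have hlt : ∀ ζ ∈ t, ζ ∈ Set.Iio ξ := fun ζ hζ => (ht hζ).trans_le hη
        conv_rhs => rw [← Finset.subtype_map_of_mem hlt, Finset.map_eq_image, Finset.image_image]
        rfl
      have himage_eq : t.image y = t.image y' := Finset.image_congr (hIio.mono ht)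
      rw [← himage y, hcolor, himage, himage, himage_eq]
    rw [hy, hy', ← hIio.image_eq, hsimilar]

end TreeBranches

theorem mk_finset_le {α : Type u} {l : Cardinal.{u}} (hl : ℵ₀ ≤ l) (hα : #α ≤ l) :
    #(Finset α) ≤ l := by
  obtain _ | _ := finite_or_infinite α
  · exact (lt_aleph0_of_finite _).le.trans hl
  · exact (mk_finset_of_infinite α).trans_le hα

open Classical in
theorem exists_isEndHomogeneous_of_two_power_lt {X C W : Type u} [LinearOrder W] [WellFoundedLT W]
    {l : Cardinal.{u}} (hl : ℵ₀ ≤ l) (hC : #C ≤ 2 ^ l) (hW : #W ≤ 2 ^ l)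
    (hIio : ∀ ξ : W, #(Set.Iio ξ) ≤ l) (hX : 2 ^ l < #X) (f : Finset X → C) :
    ∃ (g : Finset X → C) (y : W → X), IsEndHomogeneous f g y := by
  have hX_nonempty : Nonempty X := mk_ne_zero_iff.1 (zero_le.trans_lt hX).ne'
  choose y hy using fun x : X =>
    exists_forall_eq_image_Iio (W := W) fun P => Classical.epsilon (· ∈ similarOver f x P)
  by_contra hnone
  have hit (x : X) : ∃ ξ, y x ξ = x := by
    by_contra! hx
    exact hnone ⟨_, _, isEndHomogeneous_of_forall_ne (hy x) hx⟩
  have hcover : ⋃ ξ, {x | y x ξ = x} = Set.univ := Set.iUnion_eq_univ_iff.2 hit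
  have hpiece (ξ : W) : #{x | y x ξ = x} ≤ 2 ^ l := by
    let code (x : {x | y x ξ = x}) (t : Finset (Set.Iio ξ)) : C :=
      f (insert x.1 (t.image fun η : Set.Iio ξ => y x η))
    have hcode : Function.Injective code := by
      rintro ⟨x, hx⟩ ⟨x', hx'⟩ hxx'
      have := eqOn_Iic_of_color_insert_eq (hy x) (hy x') (congr_fun hxx') le_rfl
      exact Subtype.ext (hx.symm.trans (this.trans hx'))
    calc #{x | y x ξ = x} ≤ #(Finset (Set.Iio ξ) → C) := mk_le_of_injective hcode
      _ = #C ^ #(Finset (Set.Iio ξ)) := by simp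
      _ ≤ (2 ^ l) ^ l :=
        (power_le_power_right hC).trans
          (power_le_power_left (power_ne_zero _ two_ne_zero) (mk_finset_le hl (hIio ξ)))
      _ = 2 ^ l := by rw [← power_mul, mul_eq_self hl]
  refine hX.not_ge ?_
  calc #X = #(⋃ ξ, {x | y x ξ = x}) := by rw [hcover, mk_univ]
    _ ≤ #W * ⨆ ξ, #{x | y x ξ = x} := mk_iUnion_le _
    _ ≤ 2 ^ l * 2 ^ l := mul_le_mul' hW (ciSup_le' hpiece)
    _ = 2 ^ l := mul_eq_self (hl.trans (cantor l).le)

theorem erdos_rado {X C : Type u} {l : Cardinal.{u}} (hl : ℵ₀ ≤ l) (hC : #C ≤ l) {n : ℕ}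
    (hX : (fun c : Cardinal.{u} => 2 ^ c)^[n] l < #X) (f : Finset X → C) :
    ∃ Y : Set X, l < #Y ∧ IsHomogeneous f (n + 1) Y := by
  classical
  induction n generalizing X with
  | zero =>
    obtain ⟨c, hc⟩ := infinite_pigeonhole_card (fun x => f {x}) (Order.succ l)
      (Order.succ_le_of_lt hX) (hl.trans (Order.le_succ l))
      ((isRegular_succ hl).cof_ord.symm ▸ Order.lt_succ_of_le hC)
    refine ⟨_, Order.succ_le_iff.1 hc, fun s t hs ht hs_card ht_card => ?_⟩
    obtain ⟨a, rfl⟩ := Finset.card_eq_one.1 hs_card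
    obtain ⟨b, rfl⟩ := Finset.card_eq_one.1 ht_card
    have ha : f {a} = c := hs (by simp)
    have hb : f {b} = c := ht (by simp)
    rw [ha, hb]
  | succ n ih =>
    rw [Function.iterate_succ_apply'] at hX
    set m : Cardinal.{u} := (fun c => 2 ^ c)^[n] l
    have hlm : l ≤ m := Function.id_le_iterate_of_id_le (fun c => (cantor c).le) n l
    obtain ⟨g, y, hy⟩ := exists_isEndHomogeneous_of_two_power_lt (W := (Order.succ m).ord.ToType)
      (hl.trans hlm) ((hC.trans hlm).trans (cantor m).le)
      ((mk_ord_toType _).trans_le (Order.succ_le_of_lt (cantor m)))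
      (fun ξ => Order.lt_succ_iff.1 (by simpa using mk_Iio_lt ξ)) hX f
    obtain ⟨Y, hYl, hY⟩ := ih ((Order.lt_succ m).trans_eq (mk_ord_toType _).symm)
      fun t => g (t.map ⟨y, hy.injective⟩)
    exact ⟨y '' Y, (mk_image_eq hy.injective).symm ▸ hYl, hy.isHomogeneous_image hY⟩

theorem exists_infinite_isHomogeneous_of_countable {X : Type u} {C : Type*} [Countable C] {n : ℕ}
    (hX : (fun c : Cardinal.{u} => 2 ^ c)^[n] ℵ₀ < #X) (f : Finset X → C) :
    ∃ Y : Set X, Y.Infinite ∧ IsHomogeneous f (n + 1) Y := by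
  obtain ⟨code, hcode⟩ := exists_injective_nat C
  obtain ⟨Y, hYl, hY⟩ := erdos_rado le_rfl (mk_le_aleph0 (α := ULift.{u} ℕ)) hX
    fun s => ULift.up (code (f s))
  refine ⟨Y, Set.infinite_coe_iff.1 (infinite_iff.2 hYl.le), fun s t hs ht hs_card ht_card => ?_⟩
  exact hcode (ULift.up_injective (hY s t hs ht hs_card ht_card))

end PartitionCalculus

section Indiscernible

theorem exists_forall_trans_eq {C : Type*} [Finite C] {m : ℕ} (c : (Fin m ↪o ℕ) → C) :
    ∃ M : ℕ ↪o ℕ, ∀ w w' : Fin m ↪o ℕ, c (w.trans M) = c (w'.trans M) := by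
  let f (s : Finset ℕ) : Option C :=
    if h : s.card = m then some (c (s.orderEmbOfFin h)) else none
  have hf (v : Fin m ↪o ℕ) : f (Finset.univ.map v.toEmbedding) = some (c v) := by
    have hcard : (Finset.univ.map v.toEmbedding).card = m := by simp
    have hv : v = (Finset.univ.map v.toEmbedding).orderEmbOfFin hcard :=
      Finset.orderEmbOfFin_unique' hcard fun i => by simp
    rw [show f _ = some _ from dif_pos hcard, ← hv]
  obtain ⟨Y, hY_inf, hY⟩ := exists_infinite_isHomogeneous_nat f m
  have := hY_inf.to_subtype
  have := Classical.decPred (· ∈ Y)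
  let M : ℕ ↪o ℕ := Nat.orderEmbeddingOfSet Y
  have hM (w : Fin m ↪o ℕ) : ↑(Finset.univ.map (w.trans M).toEmbedding) ⊆ Y := by
    rintro x hx
    obtain ⟨i, -, rfl⟩ := Finset.mem_map.1 hx
    exact Nat.orderEmbeddingOfSet_range Y ▸ Set.mem_range_self (w i)
  refine ⟨M, fun w w' => Option.some_injective _ ?_⟩
  rw [← hf, ← hf]
  exact hY _ _ (hM w) (hM w') (by simp) (by simp)

theorem exists_eq_trans_of_range_subset {α β γ : Type*} [PartialOrder α] [Preorder β]
    [Preorder γ] (s : α ↪o γ) (w : β ↪o γ) (h : Set.range s ⊆ Set.range w) :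
    ∃ σ : α ↪o β, s = σ.trans w := by
  choose σ hσ using fun a => h (Set.mem_range_self a)
  have hle (a b : α) : σ a ≤ σ b ↔ a ≤ b := by rw [← w.le_iff_le, hσ, hσ, s.le_iff_le]
  exact ⟨OrderEmbedding.ofMapLEIff σ hle, RelEmbedding.ext fun a => (hσ a).symm⟩

theorem exists_common_factor {r : ℕ} (s t : Fin r ↪o ℕ) :
    ∃ (σ τ : Fin r ↪o Fin (r + r)) (w : Fin (r + r) ↪o ℕ), s = σ.trans w ∧ t = τ.trans w := by
  obtain ⟨U, hU, hcard⟩ := Infinite.exists_superset_card_eq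
    (Finset.univ.image s ∪ Finset.univ.image t) (r + r)
    ((Finset.card_union_le _ _).trans
      (add_le_add (by simpa using Finset.card_image_le (s := Finset.univ) (f := s))
        (by simpa using Finset.card_image_le (s := Finset.univ) (f := t))))
  have hrange : Set.range (U.orderEmbOfFin hcard) = U := Finset.range_orderEmbOfFin U hcard
  obtain ⟨σ, hσ⟩ := exists_eq_trans_of_range_subset s (U.orderEmbOfFin hcard) (by
    rintro _ ⟨p, rfl⟩
    exact hrange ▸ hU (Finset.mem_union_left _ (Finset.mem_image_of_mem s (Finset.mem_univ p))))
  obtain ⟨τ, hτ⟩ := exists_eq_trans_of_range_subset t (U.orderEmbOfFin hcard) (by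
    rintro _ ⟨p, rfl⟩
    exact hrange ▸ hU (Finset.mem_union_right _ (Finset.mem_image_of_mem t (Finset.mem_univ p))))
  exact ⟨σ, τ, _, hσ, hτ⟩

theorem exists_extend_orderEmbedding {m : ℕ} (w : Fin m ↪o ℕ) :
    ∃ φ : ℕ ↪o ℕ, w = (Fin.valOrderEmb m).trans φ := by
  let f (n : ℕ) : ℕ := if h : n < m then w ⟨n, h⟩ else (∑ i, w i) + n + 1
  have hf : StrictMono f := by
    intro a b hab
    by_cases hb : b < m
    · simpa [f, hb, hab.trans hb] using hab
    · by_cases ha : a < m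
      · have : w ⟨a, ha⟩ ≤ ∑ i, w i :=
          Finset.single_le_sum (fun _ _ => Nat.zero_le _) (Finset.mem_univ _)
        simp only [f, ha, hb, dif_pos, dif_neg, not_false_eq_true]
        omega
      · simpa [f, ha, hb] using hab
  have hfw (i : Fin m) : f i = w i := dif_pos i.2
  exact ⟨OrderEmbedding.ofStrictMono f hf, RelEmbedding.ext fun i => (hfw i).symm⟩

variable {r : ℕ} {J I : Type*}

/-- A labelling of the increasing `r`-tuples of naturals by families in `I` indexed by `J` is
indiscernible if coincidences between labels are invariant under order embeddings `ℕ ↪o ℕ`,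
so that they only depend on the relative position of the two tuples. -/
def IsIndiscernible (D : (Fin r ↪o ℕ) → J → I) : Prop :=
  ∀ (φ : ℕ ↪o ℕ) (s t : Fin r ↪o ℕ) (j k : J),
    D (s.trans φ) j = D (t.trans φ) k ↔ D s j = D t k

theorem exists_isIndiscernible_trans [Finite J] (D : (Fin r ↪o ℕ) → J → I) :
    ∃ M : ℕ ↪o ℕ, IsIndiscernible fun s => D (s.trans M) := by
  let coincidences (w : Fin (r + r) ↪o ℕ) :
      Set ((Fin r ↪o Fin (r + r)) × (Fin r ↪o Fin (r + r)) × J × J) :=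
    {x | D (x.1.trans w) x.2.2.1 = D (x.2.1.trans w) x.2.2.2}
  have : Finite (Fin r ↪o Fin (r + r)) := DFunLike.finite _
  obtain ⟨M, hM⟩ := exists_forall_trans_eq coincidences
  refine ⟨M, fun φ s t j k => ?_⟩
  obtain ⟨σ, τ, w, rfl, rfl⟩ := exists_common_factor s t
  exact Set.ext_iff.1 (hM (w.trans φ) w) (σ, τ, j, k)

/-- The `j`-th label depends on the `p`-th entry of the tuple. -/
def IsEssential (D : (Fin r ↪o ℕ) → J → I) (j : J) (p : Fin r) : Prop :=
  ∃ s t : Fin r ↪o ℕ, (∀ q ≠ p, s q = t q) ∧ D s j ≠ D t j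

variable {D : (Fin r ↪o ℕ) → J → I} {j k : J} {p : Fin r} {s t : Fin r ↪o ℕ}

theorem label_eq_of_le_of_forall_isEssential (hle : ∀ q, s q ≤ t q)
    (h : ∀ q, IsEssential D j q → s q = t q) : D s j = D t j := by
  let f (k : ℕ) (q : Fin r) : ℕ := if q.1 < k then s q else t q
  have hf (k : ℕ) : StrictMono (f k) := by
    intro a b hab
    have hs : s a < s b := s.strictMono hab
    have ht : t a < t b := t.strictMono hab
    have := hle a
    have : a.1 < b.1 := hab
    simp only [f]
    split_ifs <;> omega
  let hybrid (k : ℕ) : Fin r ↪o ℕ := OrderEmbedding.ofStrictMono (f k) (hf k)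
  have hstep (k : ℕ) : D (hybrid k) j = D t j := by
    induction k with
    | zero => congr 1
    | succ k ih =>
      rw [← ih]
      by_contra hne
      have hdiff : ∃ q, hybrid (k + 1) q ≠ hybrid k q := DFunLike.ne_iff.1 fun h => hne (h ▸ rfl)
      obtain ⟨p, hp⟩ := hdiff
      have hpk : p.1 = k ∧ s p ≠ t p := by
        change (if p.1 < k + 1 then s p else t p) ≠ (if p.1 < k then s p else t p) at hp
        grind
      refine hpk.2 (h p ⟨hybrid (k + 1), hybrid k, fun q hq => ?_, hne⟩)
      change (if q.1 < k + 1 then s q else t q) = (if q.1 < k then s q else t q)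
      grind
  rw [← hstep r]
  exact congrArg (D · j) (RelEmbedding.ext fun q => (if_pos q.2).symm)

theorem label_eq_of_forall_isEssential (h : ∀ q, IsEssential D j q → s q = t q) :
    D s j = D t j := by
  let u : Fin r ↪o ℕ := OrderEmbedding.ofStrictMono (fun q => max (s q) (t q)) fun a b hab =>
    max_lt_max (s.strictMono hab) (t.strictMono hab)
  have hu (q : Fin r) : u q = max (s q) (t q) := rfl
  have hsu : D s j = D u j := label_eq_of_le_of_forall_isEssential (fun q => le_max_left _ _)
    fun q hq => by rw [hu, h q hq, max_self]
  have htu : D t j = D u j := label_eq_of_le_of_forall_isEssential (fun q => le_max_right _ _)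
    fun q hq => by rw [hu, h q hq, max_self]
  rw [hsu, htu]

theorem exists_eq_succAbove_trans (hst : ∀ q ≠ p, s q = t q) (hp : s p < t p) :
    ∃ w : Fin (r + 1) ↪o ℕ, s = p.succ.succAboveOrderEmb.trans w ∧
      t = p.castSucc.succAboveOrderEmb.trans w := by
  let f : Fin (r + 1) → ℕ := p.succ.insertNth (t p) s
  have hfs (q : Fin r) : f (p.succ.succAbove q) = s q := Fin.insertNth_apply_succAbove ..
  have hft (q : Fin r) : f (p.castSucc.succAbove q) = t q := by
    obtain rfl | hq := eq_or_ne q p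
    · rw [Fin.succAbove_castSucc_self]
      exact Fin.insertNth_apply_same ..
    · rw [← hst q hq, ← hfs]
      congr 1
      obtain hlt | hgt := hq.lt_or_gt
      · rw [Fin.succAbove_castSucc_of_lt p q hlt, Fin.succAbove_succ_of_le p q hlt.le]
      · rw [Fin.succAbove_castSucc_of_le p q hgt.le, Fin.succAbove_succ_of_lt p q hgt]
  have hf : StrictMono f := by
    intro a b hab
    by_cases hs : a ≠ p.succ ∧ b ≠ p.succ
    · obtain ⟨a, rfl⟩ := Fin.exists_succAbove_eq hs.1
      obtain ⟨b, rfl⟩ := Fin.exists_succAbove_eq hs.2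
      rw [hfs, hfs]
      exact s.strictMono ((Fin.strictMono_succAbove _).lt_iff_lt.1 hab)
    by_cases ht : a ≠ p.castSucc ∧ b ≠ p.castSucc
    · obtain ⟨a, rfl⟩ := Fin.exists_succAbove_eq ht.1
      obtain ⟨b, rfl⟩ := Fin.exists_succAbove_eq ht.2
      rw [hft, hft]
      exact t.strictMono ((Fin.strictMono_succAbove _).lt_iff_lt.1 hab)
    have hp₀ : f p.castSucc = s p := by rw [← hfs, Fin.succAbove_succ_self]
    have hp₁ : f p.succ = t p := by rw [← hft, Fin.succAbove_castSucc_self]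
    have : p.castSucc < p.succ := Fin.castSucc_lt_succ
    grind
  exact ⟨OrderEmbedding.ofStrictMono f hf, RelEmbedding.ext fun q => (hfs q).symm,
    RelEmbedding.ext fun q => (hft q).symm⟩

theorem IsIndiscernible.label_ne (hD : IsIndiscernible D) (hp : IsEssential D j p)
    (hst : ∀ q ≠ p, s q = t q) (hne : s p ≠ t p) : D s j ≠ D t j := by
  wlog hlt : s p < t p generalizing s t
  · exact (this (fun q hq => (hst q hq).symm) hne.symm (hne.lt_or_gt.resolve_left hlt)).symm
  obtain ⟨s₀, t₀, hst₀, hne₀⟩ := hp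
  wlog hlt₀ : s₀ p < t₀ p generalizing s₀ t₀
  · have hne₀p : s₀ p ≠ t₀ p := fun hp => hne₀ <| congrArg (D · j) <| RelEmbedding.ext fun q =>
      (eq_or_ne q p).elim (fun hq => hq ▸ hp) (hst₀ q)
    exact this t₀ s₀ (fun q hq => (hst₀ q hq).symm) hne₀.symm (hne₀p.lt_or_gt.resolve_left hlt₀)
  obtain ⟨w, rfl, rfl⟩ := exists_eq_succAbove_trans hst hlt
  obtain ⟨w₀, rfl, rfl⟩ := exists_eq_succAbove_trans hst₀ hlt₀
  obtain ⟨φ, rfl⟩ := exists_extend_orderEmbedding w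
  obtain ⟨φ₀, rfl⟩ := exists_extend_orderEmbedding w₀
  let left := p.succ.succAboveOrderEmb.trans (Fin.valOrderEmb (r + 1))
  let right := p.castSucc.succAboveOrderEmb.trans (Fin.valOrderEmb (r + 1))
  exact fun h => hne₀ ((hD φ₀ left right j j).2 ((hD φ left right j j).1 h))

theorem IsIndiscernible.exists_isEssential_of_label_eq (hD : IsIndiscernible D)
    (h : D t j = D s k) (hp : IsEssential D j p) : ∃ q, IsEssential D k q ∧ s q = t p := by
  by_contra! hnone
  let φ : ℕ ↪o ℕ := OrderEmbedding.ofStrictMono (2 * ·) fun a b hab => by simpa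
  let ψ : ℕ ↪o ℕ := OrderEmbedding.ofStrictMono (fun n => if n = t p then 2 * n + 1 else 2 * n)
    fun a b hab => by dsimp only; split_ifs <;> omega
  have hφ (n : ℕ) : φ n = 2 * n := rfl
  have hψ (n : ℕ) : ψ n = if n = t p then 2 * n + 1 else 2 * n := rfl
  have hs : D (s.trans φ) k = D (s.trans ψ) k := label_eq_of_forall_isEssential fun q hq => by
    simp [hφ, hψ, hnone q hq]
  have ht : D (t.trans φ) j = D (t.trans ψ) j := by
    rw [(hD φ t s j k).2 h, (hD ψ t s j k).2 h, hs]
  exact hD.label_ne hp (fun q hq => by simp [hφ, hψ, hq]) (by simp [hφ, hψ]) ht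

end Indiscernible

section BohrNull

open Topology

theorem exists_orderEmbedding_forall_mem {r : ℕ} (X : Fin r → Set ℕ) (hX : ∀ p, (X p).Infinite) :
    ∃ s : Fin r ↪o ℕ, ∀ p, s p ∈ X p := by
  have hfreq (n : ℕ) : ∃ᶠ x in Filter.atTop, ∀ h : n < r, x ∈ X ⟨n, h⟩ := by
    by_cases h : n < r
    · simp only [h, forall_true_left]
      exact Nat.frequently_atTop_iff_infinite.2 (hX ⟨n, h⟩)
    · simp [h, Filter.atTop_neBot]
  obtain ⟨φ, hφ, hmem⟩ := Filter.extraction_forall_of_frequently hfreq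
  exact ⟨(Fin.valOrderEmb r).trans (OrderEmbedding.ofStrictMono φ hφ), fun p => hmem p p.2⟩

theorem exists_infinite_inter_fiber {C : Type*} [Finite C] {X : Set ℕ} (hX : X.Infinite)
    (c : ℕ → C) : ∃ a, (X ∩ c ⁻¹' {a}).Infinite := by
  by_contra! h
  exact hX <| (Set.finite_iUnion h).subset fun x hx => Set.mem_iUnion.2 ⟨c x, hx, rfl⟩

theorem exists_monochromatic_forall_unpair_fst_eq_iff {C : Type*} [Finite C] {r : ℕ}
    (c : ℕ → C) (ρ : Fin r → ℕ) :
    ∃ (s : Fin r ↪o ℕ) (a : C), (∀ p, c (s p) = a) ∧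
      ∀ p q, (s p).unpair.1 = (s q).unpair.1 ↔ ρ p = ρ q := by
  have hrow (m : ℕ) : {x : ℕ | x.unpair.1 = m}.Infinite :=
    Set.infinite_of_injective_forall_mem (f := Nat.pair m)
      (fun a b h => (Nat.pair_eq_pair.1 h).2) fun y => by simp
  choose rowColor hrowColor using fun m => exists_infinite_inter_fiber (hrow m) c
  obtain ⟨a, ha⟩ := exists_infinite_inter_fiber Set.infinite_univ rowColor
  let R : ℕ → ℕ := fun m => ha.natEmbedding _ m
  have hR : Function.Injective R := Subtype.val_injective.comp (ha.natEmbedding _).injective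
  have hRa (m : ℕ) : rowColor (R m) = a := (ha.natEmbedding _ m).2.2
  obtain ⟨s, hs⟩ := exists_orderEmbedding_forall_mem _ fun p => hrowColor (R (ρ p))
  refine ⟨s, a, fun p => (hs p).2.trans (hRa _), fun p q => ?_⟩
  rw [show (s p).unpair.1 = _ from (hs p).1, show (s q).unpair.1 = _ from (hs q).1, hR.eq_iff]

theorem even_card_filter_comp {X B C : Type*} [Fintype X] [DecidableEq B] [DecidableEq C]
    {ρ : X → B} (hρ : ∀ b, Even (Finset.univ.filter fun x => ρ x = b).card)
    (g : B → C) (a : C) : Even (Finset.univ.filter fun x => g (ρ x) = a).card := by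
  rw [Finset.card_eq_sum_card_image ρ]
  refine Finset.even_sum _ fun b hb => ?_
  obtain ⟨x, hx, rfl⟩ := Finset.mem_image.1 hb
  have hfiber : ∀ y, ρ y = ρ x → g (ρ y) = a := fun y hy => hy ▸ (Finset.mem_filter.1 hx).2
  rw [Finset.filter_filter, Finset.filter_congr fun y _ => and_iff_right_of_imp (hfiber y)]
  exact hρ (ρ x)

/-- Continuity at `0` of a map on `{0} ∪ [ℕ]^r ⊆ B_ω` into `G^#` sending `0` to `0`, expressed by
finite colourings: the finite partitions of `ℕ` generate the Bohr neighbourhoods of `0` in `B_ω`,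
the neighbourhood of a partition consisting of the `s` that meet each of its blocks evenly. -/
def IsBohrNull {r : ℕ} {G : Type*} [AddCommGroup G] (F : (Fin r ↪o ℕ) → G) : Prop :=
  ∀ χ : G →+ AddCircle (1 : ℝ), ∀ U ∈ 𝓝 (0 : AddCircle (1 : ℝ)), ∃ (k : ℕ) (c : ℕ → Fin k),
    ∀ s : Fin r ↪o ℕ, (∀ a, Even (Finset.univ.filter fun p => c (s p) = a).card) → χ (F s) ∈ U

namespace IsBohrNull

variable {r : ℕ} {G K : Type*} [AddCommGroup G] [AddCommGroup K] {F : (Fin r ↪o ℕ) → G}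

theorem map (hF : IsBohrNull F) (θ : G →+ K) : IsBohrNull fun s => θ (F s) :=
  fun χ => hF (χ.comp θ)

theorem precomp (hF : IsBohrNull F) (M : ℕ ↪o ℕ) : IsBohrNull fun s => F (s.trans M) := by
  intro χ U hU
  obtain ⟨k, c, hc⟩ := hF χ U hU
  exact ⟨k, c ∘ M, fun s => hc (s.trans M)⟩

theorem exists_coloring_ne (hF : IsBohrNull F) (χ : G →+ AddCircle (1 : ℝ))
    {z : AddCircle (1 : ℝ)} (hz : z ≠ 0) : ∃ (k : ℕ) (c : ℕ → Fin k), ∀ s : Fin r ↪o ℕ,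
      (∀ a, Even (Finset.univ.filter fun p => c (s p) = a).card) → χ (F s) ≠ z :=
  hF χ {z}ᶜ (isOpen_ne.mem_nhds hz.symm)

theorem exists_unpair_fst_eq_iff_ne (hF : IsBohrNull F) (hr : Even r)
    (χ : G →+ AddCircle (1 : ℝ)) {z : AddCircle (1 : ℝ)} (hz : z ≠ 0) (ρ : Fin r → ℕ) :
    ∃ s : Fin r ↪o ℕ, (∀ p q, (s p).unpair.1 = (s q).unpair.1 ↔ ρ p = ρ q) ∧ χ (F s) ≠ z := by
  obtain ⟨k, c, hc⟩ := hF.exists_coloring_ne χ hz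
  obtain ⟨s, a, hsa, hs⟩ := exists_monochromatic_forall_unpair_fst_eq_iff c ρ
  refine ⟨s, hs, hc s fun b => ?_⟩
  by_cases hab : a = b <;> simp [hsa, hab, hr]

theorem exists_forall_mem_ne {B : Type*} [DecidableEq B] (hF : IsBohrNull F)
    (χ : G →+ AddCircle (1 : ℝ)) {z : AddCircle (1 : ℝ)} (hz : z ≠ 0) (ρ : Fin r → B)
    (hρ : ∀ b, Even (Finset.univ.filter fun p => ρ p = b).card) (X : B → Set ℕ)
    (hX : ∀ b, (X b).Infinite) : ∃ s : Fin r ↪o ℕ, (∀ p, s p ∈ X (ρ p)) ∧ χ (F s) ≠ z := by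
  obtain ⟨k, c, hc⟩ := hF.exists_coloring_ne χ hz
  choose color hcolor using fun b => exists_infinite_inter_fiber (hX b) c
  obtain ⟨s, hs⟩ := exists_orderEmbedding_forall_mem _ fun p => hcolor (ρ p)
  have hsc (p : Fin r) : c (s p) = color (ρ p) := (hs p).2
  refine ⟨s, fun p => (hs p).1, hc s fun a => ?_⟩
  simpa only [hsc] using even_card_filter_comp hρ color a

theorem add_eq_zero_of_forall_sum_ite_even (hF : IsBohrNull F) (hr : Even r) (m : Fin r → G)
    (hFm : ∀ s, F s = ∑ p, if Even (s p) then m p else 0) {p q : Fin r} (hpq : p ≠ q) :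
    m p + m q = 0 := by
  by_contra hne
  obtain ⟨χ, hχ⟩ := exists_addMonoidHom_addCircle_ne_zero hne
  let X (b : Bool) : Set ℕ := {x | Even x ↔ b}
  have hX (b : Bool) : (X b).Infinite := by
    refine Set.infinite_of_injective_forall_mem (f := fun x : ℕ => 2 * x + if b then 0 else 1)
      (fun x y h => by simpa using h) fun x => ?_
    cases b <;> simp [X]
  have hcard : (Finset.univ.filter fun x => x = p ∨ x = q).card = 2 := by
    rw [Finset.filter_or, Finset.filter_eq', Finset.filter_eq']
    simp [hpq]
  have hρ (b : Bool) : Even (Finset.univ.filter fun x => decide (x = p ∨ x = q) = b).card := by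
    cases b
    · have := Finset.card_filter_add_card_filter_not (s := Finset.univ) fun x => x = p ∨ x = q
      rw [hcard, Finset.card_univ, Fintype.card_fin] at this
      simp only [decide_eq_false_iff_not]
      grind
    · simp [hcard]
  obtain ⟨s, hs, hne⟩ := hF.exists_forall_mem_ne χ hχ _ hρ X hX
  have hs' (x : Fin r) : Even (s x) ↔ x = p ∨ x = q := by simpa [X] using hs x
  refine hne (congrArg χ ?_)
  simp only [hFm, hs', ← Finset.sum_filter]
  rw [Finset.filter_or, Finset.filter_eq', Finset.filter_eq']
  simp [hpq]

end IsBohrNull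

variable {r : ℕ} {J I A : Type*} [AddCommGroup A]

theorem index_eq_of_label_eq_of_aligned {D : (Fin r ↪o ℕ) → J → I} (hD : IsIndiscernible D)
    (hinj : ∀ s, Function.Injective (D s)) {j k : J} (hj : ¬ ∃! p, IsEssential D j p)
    {α : Type*} (row : ℕ → α) {s t : Fin r ↪o ℕ}
    (hs : ∀ p q, p ≠ q → row (s p) = row (s q) → IsEssential D j p)
    (ht : ∀ p q, IsEssential D j p → IsEssential D j q → row (t p) = row (t q))
    (hts : D t j = D s k) : j = k := by
  choose σ _ hσ using fun p : {p // IsEssential D j p} =>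
    hD.exists_isEssential_of_label_eq hts p.2
  have hmono : StrictMono σ := fun p q hpq => by
    rw [← s.lt_iff_lt, hσ, hσ]
    exact t.strictMono hpq
  have hmaps (p) : IsEssential D j (σ p) := by
    obtain ⟨q, hq, hqp⟩ : ∃ q, IsEssential D j q ∧ q ≠ p := by
      by_contra! h
      exact hj ⟨p, p.2, h⟩
    refine hs (σ p) (σ ⟨q, hq⟩) (fun h => hqp (congrArg Subtype.val (hmono.injective h)).symm) ?_
    rw [hσ, hσ, ht p q p.2 hq]
  let τ (p : {p // IsEssential D j p}) : {p // IsEssential D j p} := ⟨σ p, hmaps p⟩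
  have hτ : StrictMono τ := fun p q hpq => hmono hpq
  refine hinj s (hts ▸ label_eq_of_forall_isEssential fun p hp => ?_)
  -- A strictly monotone self-map of a finite linear order is the identity.
  have hfix : σ ⟨p, hp⟩ = p := congrArg Subtype.val (le_antisymm hτ.apply_le hτ.le_apply)
  rw [← hσ ⟨p, hp⟩, hfix]

open Classical in
theorem existsUnique_isEssential [Fintype J] (hr : Even r) {D : (Fin r ↪o ℕ) → J → I}
    (hD : IsIndiscernible D) (hinj : ∀ s, Function.Injective (D s)) {d : J → A}
    (hd : ∀ j, d j ≠ 0) (hF : IsBohrNull fun s => ∑ j, Finsupp.single (D s j) (d j)) (j : J) :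
    ∃! p, IsEssential D j p := by
  by_contra hj
  obtain ⟨ψ, hψ⟩ := exists_addMonoidHom_addCircle_ne_zero (hd j)
  let alignedLabels : Set I := {x | ∃ t : Fin r ↪o ℕ, D t j = x ∧ ∀ p q,
    IsEssential D j p → IsEssential D j q → (t p).unpair.1 = (t q).unpair.1}
  let χ : (I →₀ A) →+ AddCircle (1 : ℝ) :=
    Finsupp.liftAddHom fun x => if x ∈ alignedLabels then ψ else 0
  obtain ⟨s, hs, hne⟩ := hF.exists_unpair_fst_eq_iff_ne hr χ hψ
    fun p => if IsEssential D j p then 0 else p.1 + 1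
  have hmem : D s j ∈ alignedLabels := ⟨s, rfl, fun p q hp hq => (hs p q).2 (by simp [hp, hq])⟩
  have hnotMem (k : J) (hk : k ≠ j) : D s k ∉ alignedLabels := by
    rintro ⟨t, hts, ht⟩
    have haligned (p q : Fin r) (hpq : p ≠ q) (h : (s p).unpair.1 = (s q).unpair.1) :
        IsEssential D j p := by grind
    exact hk (index_eq_of_label_eq_of_aligned hD hinj hj (·.unpair.1) haligned ht hts).symm
  refine hne ?_
  rw [map_sum, Finset.sum_eq_single j (fun k _ hk => ?_) (by simp)]
  · simp [χ, hmem]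
  · simp [χ, hnotMem k hk]

theorem exists_addMonoidHom_single_ite_even {ι : J → ℕ → I}
    (hι : ∀ j k x y, ι j x = ι k y → x = y ∧ ∀ z, ι j z = ι k z) (x : ℕ) :
    ∃ π : (I →₀ A) →+ (I →₀ A), ∀ j y a, π (Finsupp.single (ι j y) a) =
      if Even y then Finsupp.single (ι j x) a else 0 := by
  let image (q : J × ℕ) : A →+ (I →₀ A) :=
    if Even q.2 then Finsupp.singleAddHom (ι q.1 x) else 0
  have himage : image.FactorsThrough fun q => ι q.1 q.2 := fun q q' h => by
    simp [image, (hι _ _ _ _ h).1, (hι _ _ _ _ h).2 x]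
  refine ⟨Finsupp.liftAddHom (Function.extend (fun q => ι q.1 q.2) image 0), fun j y a => ?_⟩
  rw [Finsupp.liftAddHom_apply_single, himage.extend_apply 0 (j, y)]
  by_cases hy : Even y <;> simp [image, hy]

theorem exists_forall_sum_eq_sum_of_isBohrNull [Fintype J] (hr : Even r) (hr3 : 3 ≤ r)
    {ι : J → ℕ → I} (hι : ∀ j k x y, ι j x = ι k y → x = y ∧ ∀ z, ι j z = ι k z)
    (P : J → Fin r) (d : J → A)
    (hF : IsBohrNull fun s => ∑ j, Finsupp.single (ι j (s (P j))) (d j)) :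
    ∃ v : ℕ → I →₀ A, (∀ x, v x + v x = 0) ∧
      ∀ s : Fin r ↪o ℕ, ∑ j, Finsupp.single (ι j (s (P j))) (d j) = ∑ p, v (s p) := by
  let g (p : Fin r) (x : ℕ) : I →₀ A := ∑ j with P j = p, Finsupp.single (ι j x) (d j)
  have hFg (s : Fin r ↪o ℕ) : ∑ j, Finsupp.single (ι j (s (P j))) (d j) = ∑ p, g p (s p) := by
    rw [← Finset.sum_fiberwise Finset.univ P]
    exact Finset.sum_congr rfl fun p _ => Finset.sum_congr rfl fun j hj => by
      rw [(Finset.mem_filter.1 hj).2]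
  have hadd {p q : Fin r} (hpq : p ≠ q) (x : ℕ) : g p x + g q x = 0 := by
    obtain ⟨π, hπ⟩ := exists_addMonoidHom_single_ite_even (A := A) hι x
    refine (hF.map π).add_eq_zero_of_forall_sum_ite_even hr (g · x) (fun s => ?_) hpq
    rw [hFg, map_sum]
    refine Finset.sum_congr rfl fun p _ => ?_
    by_cases hp : Even (s p) <;> simp [g, hπ, hp]
  have heq (p q : Fin r) (x : ℕ) : g p x = g q x := by
    obtain ⟨u, hup, huq⟩ := Fin.exists_ne_and_ne_of_two_lt p q hr3
    exact add_right_cancel ((hadd hup.symm x).trans (hadd huq.symm x).symm)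
  have : NeZero r := ⟨by omega⟩
  have : Nontrivial (Fin r) := Fin.nontrivial_iff_two_le.2 (by omega)
  obtain ⟨p, hp⟩ := exists_ne (0 : Fin r)
  refine ⟨g 0, fun x => heq p 0 x ▸ hadd hp x, fun s => ?_⟩
  rw [hFg]
  exact Finset.sum_congr rfl fun p _ => heq p 0 _

theorem exists_label_eq_of_existsUnique_isEssential {D : (Fin r ↪o ℕ) → J → I}
    (hD : IsIndiscernible D) (hess : ∀ j, ∃! p, IsEssential D j p) :
    ∃ (M : ℕ ↪o ℕ) (P : J → Fin r) (ι : J → ℕ → I),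
      (∀ j k x y, ι j x = ι k y → x = y ∧ ∀ z, ι j z = ι k z) ∧
      ∀ (s : Fin r ↪o ℕ) j, D (s.trans M) j = ι j (s (P j)) := by
  choose P hP hPu using hess
  let shift (x : ℕ) : ℕ ↪o ℕ := OrderEmbedding.ofStrictMono (· + x) fun a b h => by simpa
  -- The offset `r` keeps the subtraction from truncating and puts the `P j`-th entry at `r`.
  let b (j : J) : Fin r ↪o ℕ := OrderEmbedding.ofStrictMono (fun q => r + q - P j) fun p q h => by
    have : p.1 < q.1 := h
    dsimp only
    omega
  have hb (j : J) (x : ℕ) : (b j).trans (shift x) (P j) = r + x := by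
    change r + (P j).1 - (P j).1 + x = r + x
    omega
  refine ⟨shift r, P, fun j x => D ((b j).trans (shift x)) j, fun j k x y h => ?_, fun s j => ?_⟩
  · obtain ⟨q, hq, hqx⟩ := hD.exists_isEssential_of_label_eq h (hP j)
    rw [hPu k q hq, hb, hb] at hqx
    obtain rfl : x = y := by omega
    exact ⟨rfl, fun z => (hD (shift z) _ _ j k).2 ((hD (shift x) _ _ j k).1 h)⟩
  · refine label_eq_of_forall_isEssential fun q hq => ?_
    rw [hPu j q hq, hb, add_comm]
    rfl

theorem exists_forall_sum_trans_eq_sum [Fintype J] (hr : Even r) (hr3 : 3 ≤ r)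
    {D : (Fin r ↪o ℕ) → J → I} (hinj : ∀ s, Function.Injective (D s)) {d : J → A}
    (hd : ∀ j, d j ≠ 0) (hF : IsBohrNull fun s => ∑ j, Finsupp.single (D s j) (d j)) :
    ∃ (M : ℕ ↪o ℕ) (v : ℕ → I →₀ A), (∀ x, v x + v x = 0) ∧
      ∀ s : Fin r ↪o ℕ, ∑ j, Finsupp.single (D (s.trans M) j) (d j) = ∑ p, v (s p) := by
  obtain ⟨M, hM⟩ := exists_isIndiscernible_trans D
  have hess := existsUnique_isEssential hr hM (fun s => hinj _) hd (hF.precomp M)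
  obtain ⟨N, P, ι, hι, hDι⟩ := exists_label_eq_of_existsUnique_isEssential hM hess
  have hlabel (s : Fin r ↪o ℕ) (j : J) : D (s.trans (N.trans M)) j = ι j (s (P j)) := hDι s j
  have hnull := hF.precomp (N.trans M)
  simp only [hlabel] at hnull
  refine ⟨N.trans M, ?_⟩
  simpa only [hlabel] using exists_forall_sum_eq_sum_of_isBohrNull hr hr3 hι P d hnull

end BohrNull

section BooleanGroup

open Topology

variable {κ G H : Type*} [AddCommGroup G] [AddCommGroup H] {r : ℕ}

theorem exists_finite_forall_eq_zero_subset {U : Set G} (hU : U ∈ @nhds G (bohrTopology G) 0) :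
    ∃ T : Set (G →+ AddCircle (1 : ℝ)), T.Finite ∧ {x | ∀ η ∈ T, η x = 0} ⊆ U := by
  rw [bohrTopology, nhds_iInf, Filter.mem_iInf] at hU
  obtain ⟨T, hT, V, hV, rfl⟩ := hU
  refine ⟨T, hT, fun x hx => Set.mem_iInter.2 fun η => ?_⟩
  have hVη := hV η
  rw [nhds_induced, map_zero] at hVη
  obtain ⟨W, hW, hWV⟩ := hVη
  refine hWV ?_
  rw [Set.mem_preimage, hx η η.2]
  exact mem_of_mem_nhds hW

theorem continuous_bohrTopology (χ : G →+ AddCircle (1 : ℝ)) :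
    @Continuous _ _ (bohrTopology G) _ χ :=
  continuous_iInf_dom continuous_induced_dom

theorem single_one_add_self (a : κ) :
    Finsupp.single a (1 : ZMod 2) + Finsupp.single a 1 = 0 := by
  rw [← Finsupp.single_add, CharTwo.add_self_eq_zero, Finsupp.single_zero]

open Classical in
theorem map_sum_single_one_eq_zero {X : Type*} [Fintype X] (η : (κ →₀ ZMod 2) →+ G)
    (s : X → κ)
    (hs : ∀ y, Even (Finset.univ.filter fun q => η (Finsupp.single (s q) 1) = y).card) :
    η (∑ q, Finsupp.single (s q) 1) = 0 := by
  have hsum := Finset.sum_comp (s := Finset.univ) id fun q => η (Finsupp.single (s q) 1)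
  rw [map_sum, show ∑ q, η (Finsupp.single (s q) 1) = _ from hsum]
  refine Finset.sum_eq_zero fun y hy => ?_
  obtain ⟨q, -, rfl⟩ := Finset.mem_image.1 hy
  obtain ⟨n, hn⟩ := hs (η (Finsupp.single (s q) 1))
  rw [hn, add_nsmul, ← nsmul_add, id, ← map_add, single_one_add_self, map_zero, nsmul_zero]

theorem exists_coloring_forall_sum_single_mem {U : Set (κ →₀ ZMod 2)}
    (hU : U ∈ @nhds _ (bohrTopology (κ →₀ ZMod 2)) 0) :
    ∃ (k : ℕ) (c : κ → Fin k), ∀ {X : Type} [Fintype X] (s : X → κ),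
      (∀ a, Even (Finset.univ.filter fun q => c (s q) = a).card) →
        ∑ q, Finsupp.single (s q) 1 ∈ U := by
  classical
  obtain ⟨T, hT, hTU⟩ := exists_finite_forall_eq_zero_subset hU
  let twoTorsion : Set (AddCircle (1 : ℝ)) := {y | 2 • y = 0}
  have : Finite twoTorsion := (AddCircle.finite_torsion (1 : ℝ) two_pos).to_subtype
  have : Finite T := hT.to_subtype
  let values (a : κ) (η : T) : twoTorsion := ⟨η.1 (Finsupp.single a 1), by
    change 2 • _ = 0
    rw [two_nsmul, ← map_add, single_one_add_self, map_zero]⟩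
  let e := Finite.equivFin (T → twoTorsion)
  refine ⟨_, e ∘ values, fun s hs => hTU fun η hη => map_sum_single_one_eq_zero η s fun y => ?_⟩
  have hvalue (a : κ) : η (Finsupp.single a 1) = e.symm ((e ∘ values) a) ⟨η, hη⟩ := by simp [values]
  simpa only [hvalue] using even_card_filter_comp hs
    (fun b => (e.symm b ⟨η, hη⟩ : AddCircle (1 : ℝ))) y

theorem sum_single_support (x : κ →₀ ZMod 2) : ∑ a ∈ x.support, Finsupp.single a 1 = x := by
  conv_rhs => rw [← x.sum_single]
  refine Finset.sum_congr rfl fun a ha => ?_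
  exact congrArg _ (Fin.eq_one_of_ne_zero (x a) (Finsupp.mem_support_iff.1 ha)).symm

theorem support_sum_single_one (w : Finset κ) :
    (∑ a ∈ w, Finsupp.single a (1 : ZMod 2)).support = w := by
  classical
  ext a
  simp [Finsupp.finsetSum_apply, Finsupp.single_apply]

theorem sum_map_single_one (e : ℕ ↪ κ) (s : Fin r ↪o ℕ) :
    ∑ a ∈ Finset.univ.map (s.toEmbedding.trans e), Finsupp.single a (1 : ZMod 2) =
      ∑ q, Finsupp.single (e (s q)) 1 :=
  Finset.sum_map ..

theorem exists_eq_sum_single_of_support_subset_range (e : ℕ ↪ κ) {x : κ →₀ ZMod 2}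
    (hcard : x.support.card = r) (hx : ↑x.support ⊆ Set.range e) :
    ∃ s : Fin r ↪o ℕ, x = ∑ q, Finsupp.single (e (s q)) 1 := by
  classical
  rw [← Set.image_univ, Finset.subset_set_image_iff] at hx
  obtain ⟨T, -, hT⟩ := hx
  have hTcard : T.card = r := by rw [← hcard, ← hT, Finset.card_image_of_injective _ e.injective]
  refine ⟨T.orderEmbOfFin hTcard, ?_⟩
  rw [← sum_map_single_one, ← Finset.map_map, Finset.map_orderEmbOfFin_univ, Finset.map_eq_image,
    hT, sum_single_support]

/-- The set `{0} ∪ [S]^r` inside the Boolean group `B_κ`. -/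
def zeroUnionSubsets (r : ℕ) (S : Set κ) : Set (κ →₀ ZMod 2) :=
  {x | x = 0 ∨ (x.support.card = r ∧ ↑x.support ⊆ S)}

theorem sum_single_mem_zeroUnionSubsets (e : ℕ ↪ κ) (s : Fin r ↪o ℕ) :
    ∑ q, Finsupp.single (e (s q)) 1 ∈ zeroUnionSubsets r (Set.univ : Set κ) := by
  rw [← sum_map_single_one]
  exact Or.inr ⟨by rw [support_sum_single_one, Finset.card_map, Finset.card_fin], Set.subset_univ _⟩

theorem isBohrNull_of_continuousWithinAt {f : (κ →₀ ZMod 2) → H}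
    (hf : @ContinuousWithinAt _ _ (bohrTopology _) (bohrTopology H) f
      (zeroUnionSubsets r Set.univ) 0) (e : ℕ ↪ κ) :
    IsBohrNull fun s : Fin r ↪o ℕ => f (∑ q, Finsupp.single (e (s q)) 1) - f 0 := by
  intro χ U hU
  let _ := bohrTopology (κ →₀ ZMod 2)
  let _ := bohrTopology H
  have hcont : ContinuousWithinAt (fun x => χ (f x) - χ (f 0)) (zeroUnionSubsets r Set.univ) 0 :=
    ((continuous_bohrTopology χ).continuousAt.comp_continuousWithinAt hf).sub
      continuousWithinAt_const
  obtain ⟨V, hV, hVU⟩ := mem_nhdsWithin_iff_exists_mem_nhds_inter.1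
    (hcont (by rwa [sub_self] : U ∈ 𝓝 (χ (f 0) - χ (f 0))))
  obtain ⟨k, c, hc⟩ := exists_coloring_forall_sum_single_mem hV
  refine ⟨k, c ∘ e, fun s hs => ?_⟩
  rw [map_sub]
  exact hVU ⟨hc _ hs, sum_single_mem_zeroUnionSubsets e s⟩

theorem exists_eq_sum_single_sigma {I A : Type*} [AddCommMonoid A] (g : I →₀ A) :
    ∃ (m : Σ n : ℕ, Fin n → A) (i : Fin m.1 → I), Function.Injective i ∧ (∀ j, m.2 j ≠ 0) ∧
      g = ∑ j, Finsupp.single (i j) (m.2 j) := by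
  let e := g.support.equivFin
  refine ⟨⟨g.support.card, fun j => g (e.symm j)⟩, fun j => e.symm j,
    Subtype.val_injective.comp e.symm.injective,
    fun j => Finsupp.mem_support_iff.1 (e.symm j).2, ?_⟩
  rw [e.symm.sum_comp fun a : g.support => Finsupp.single a.1 (g a),
    Finset.sum_coe_sort g.support fun a => Finsupp.single a (g a)]
  exact g.sum_single.symm

open Cardinal in
theorem exists_embedding_forall_eq_sum_single {I A : Type*} [AddCommMonoid A] [Countable A]
    (hr : r ≠ 0) (hκ : (fun c : Cardinal => 2 ^ c)^[r - 1] ℵ₀ < #κ) (g : Finset κ → I →₀ A) :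
    ∃ (e : ℕ ↪ κ) (n : ℕ) (d : Fin n → A) (D : (Fin r ↪o ℕ) → Fin n → I), (∀ j, d j ≠ 0) ∧
      ∀ s, Function.Injective (D s) ∧
        g (Finset.univ.map (s.toEmbedding.trans e)) = ∑ j, Finsupp.single (D s j) (d j) := by
  choose m hm using fun w => exists_eq_sum_single_sigma (g w)
  obtain ⟨Y, hY, hmY⟩ := exists_infinite_isHomogeneous_of_countable hκ m
  rw [Nat.sub_one_add_one hr] at hmY
  let e : ℕ ↪ κ := (hY.natEmbedding Y).trans (Function.Embedding.subtype _)
  let tuple (s : Fin r ↪o ℕ) : Finset κ := Finset.univ.map (s.toEmbedding.trans e)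
  have htuple (s) : ↑(tuple s) ⊆ Y := by
    rw [Finset.coe_map]
    rintro _ ⟨q, -, rfl⟩
    exact (hY.natEmbedding Y (s q)).2
  obtain ⟨⟨n, d⟩, hnd⟩ : ∃ m₀, m (tuple (Fin.valOrderEmb r)) = m₀ := ⟨_, rfl⟩
  have hconst (s) : m (tuple s) = ⟨n, d⟩ :=
    (hmY _ _ (htuple s) (htuple _) (by simp [tuple]) (by simp [tuple])).trans hnd
  have hD (s) : ∃ i : Fin n → I, Function.Injective i ∧ (∀ j, d j ≠ 0) ∧
      g (tuple s) = ∑ j, Finsupp.single (i j) (d j) := by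
    have := hm (tuple s)
    rwa [hconst] at this
  choose D hDinj hd hDg using hD
  exact ⟨e, n, d, D, hd (Fin.valOrderEmb r), fun s => ⟨hDinj s, hDg s⟩⟩

open Cardinal in
theorem exists_forall_map_sub_eq_sum {I A : Type*} [AddCommGroup A] [Countable A]
    (hr : Even r) (hr3 : 3 ≤ r) (hκ : (fun c : Cardinal => 2 ^ c)^[r - 1] ℵ₀ < #κ)
    {f : (κ →₀ ZMod 2) → H}
    (hf : @ContinuousWithinAt _ _ (bohrTopology _) (bohrTopology H) f
      (zeroUnionSubsets r Set.univ) 0) (θ : H →+ (I →₀ A)) :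
    ∃ (e : ℕ ↪ κ) (v : ℕ → I →₀ A), (∀ x, v x + v x = 0) ∧ ∀ s : Fin r ↪o ℕ,
      θ (f (∑ q, Finsupp.single (e (s q)) 1) - f 0) = ∑ q, v (s q) := by
  obtain ⟨e, n, d, D, hd, hD⟩ := exists_embedding_forall_eq_sum_single (by omega) hκ
    fun w => θ (f (∑ a ∈ w, Finsupp.single a 1) - f 0)
  simp only [sum_map_single_one] at hD
  have hnull := (isBohrNull_of_continuousWithinAt hf e).map θ
  simp only [(hD _).2] at hnull
  obtain ⟨M, v, hv, hMv⟩ := exists_forall_sum_trans_eq_sum hr hr3 (fun s => (hD s).1) hd hnull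
  exact ⟨M.toEmbedding.trans e, v, hv, fun s => ((hD (s.trans M)).2).trans (hMv s)⟩

theorem exists_addMonoidHom_single_one_eq {X : Type*} (e : X ↪ κ) (v : X → G)
    (hv : ∀ x, v x + v x = 0) :
    ∃ L : (κ →₀ ZMod 2) →+ G, ∀ x, L (Finsupp.single (e x) 1) = v x := by
  let lift (x : X) : ZMod 2 →+ G := ZMod.lift 2 ⟨zmultiplesHom G (v x), by simp [two_zsmul, hv]⟩
  refine ⟨Finsupp.liftAddHom (Function.extend e lift 0), fun x => ?_⟩
  rw [Finsupp.liftAddHom_apply_single, e.injective.extend_apply]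
  simpa using ZMod.lift_coe 2 (⟨zmultiplesHom G (v x), by simp [two_zsmul, hv]⟩ :
    {f : ℤ →+ G // f ((2 : ℕ) : ℤ) = 0}) 1

theorem exists_addMonoidHom_closure_of_injective {B K : Type*} [AddCommGroup B] [AddCommGroup K]
    {θ : H →+ K} (hθ : Function.Injective θ) (L : B →+ K) {Z : Set B} {f : B → H} {a : H}
    (hf : ∀ x ∈ Z, θ (f x - a) = L x) :
    ∃ h : AddSubgroup.closure Z →+ H, ∀ (x : B) (hx : x ∈ Z),
      f x = h ⟨x, AddSubgroup.subset_closure hx⟩ + a := by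
  have hle : AddSubgroup.closure Z ≤ θ.range.comap L :=
    (AddSubgroup.closure_le _).2 fun x hx => ⟨_, hf x hx⟩
  let L' : AddSubgroup.closure Z →+ θ.range :=
    (L.comp (AddSubgroup.subtype _)).codRestrict θ.range fun x => hle x.2
  let e : H ≃+ θ.range := AddMonoidHom.ofInjective hθ
  refine ⟨e.symm.toAddMonoidHom.comp L', fun x hx => eq_add_of_sub_eq (e.injective ?_)⟩
  exact (Subtype.ext (hf x hx)).trans (e.apply_symm_apply _).symm

end BooleanGroup

open Cardinal in
theorem exists_linear_of_continuousWithinAt {κ H : Type*} [AddCommGroup H] {r : ℕ}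
    (hr : Even r) (hr3 : 3 ≤ r) (hκ : (fun c : Cardinal => 2 ^ c)^[r - 1] ℵ₀ < #κ)
    {f : (κ →₀ ZMod 2) → H}
    (hf : @ContinuousWithinAt _ _ (bohrTopology _) (bohrTopology H) f
      (zeroUnionSubsets r Set.univ) 0) :
    ∃ S : Set κ, S.Infinite ∧ ∃ h : AddSubgroup.closure (zeroUnionSubsets r S) →+ H,
      ∀ (x : κ →₀ ZMod 2) (hx : x ∈ zeroUnionSubsets r S),
        f x = h ⟨x, AddSubgroup.subset_closure hx⟩ + f 0 := by
  obtain ⟨I, θ, hθ⟩ := exists_injective_finsupp_rat_prod_addCircle H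
  obtain ⟨e, v, hv, hfv⟩ := exists_forall_map_sub_eq_sum hr hr3 hκ hf θ
  obtain ⟨L, hL⟩ := exists_addMonoidHom_single_one_eq e v hv
  refine ⟨Set.range e, Set.infinite_range_of_injective e.injective,
    exists_addMonoidHom_closure_of_injective hθ L ?_⟩
  rintro x (rfl | ⟨hcard, hx⟩)
  · rw [sub_self, map_zero, map_zero]
  · obtain ⟨s, rfl⟩ := exists_eq_sum_single_of_support_subset_range e hcard hx
    rw [hfv, map_sum]
    simp only [hL]

open Cardinal in
theorem bohr_straightening_boolean_general (κ H : Type*) [AddCommGroup H] {r : ℕ}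
    (hr : Even r) (hr4 : 4 ≤ r) (hκ : (fun c : Cardinal => 2 ^ c)^[r - 1] ℵ₀ < #κ) :
    letI := bohrTopology (κ →₀ ZMod 2)
    letI := bohrTopology H
    ∀ f : zeroUnionSubsets r (Set.univ : Set κ) → H,
      ContinuousAt f ⟨0, Or.inl rfl⟩ →
        ∃ S : Set κ, S.Infinite ∧
          ∃ (h : AddSubgroup.closure (zeroUnionSubsets r S) →+ H) (a : H),
            ∀ (x : zeroUnionSubsets r (Set.univ : Set κ))
              (hx : (x : κ →₀ ZMod 2) ∈ zeroUnionSubsets r S),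
              f x = h ⟨↑x, AddSubgroup.subset_closure hx⟩ + a := by
  intro f hf
  let _ := bohrTopology (κ →₀ ZMod 2)
  let _ := bohrTopology H
  let g : (κ →₀ ZMod 2) → H := Function.extend Subtype.val f 0
  have hext (x) : g x.1 = f x := Subtype.val_injective.extend_apply f 0 x
  have hrestrict : (zeroUnionSubsets r (Set.univ : Set κ)).domRestrict g = f := funext hext
  have hg : ContinuousWithinAt g (zeroUnionSubsets r Set.univ) 0 :=
    (continuousWithinAt_iff_continuousAt_domRestrict g (Or.inl rfl)).2 (hrestrict ▸ hf)
  obtain ⟨S, hS, h, hh⟩ := exists_linear_of_continuousWithinAt hr (by omega) hκ hg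
  exact ⟨S, hS, h, _, fun x hx => (hext x).symm.trans (hh x hx)⟩

/-- (Straightening law) Let `H` be an abelian group and `κ > 2^(2^𝔠)`. Every continuous map
`f : {0} ∪ [κ]⁴ → H^#` (topology induced from `B_κ^#`) is linear on `{0} ∪ [S]⁴` for some
infinite `S ⊆ κ`: it agrees there with `h + a` for a homomorphism `h` defined on the
subgroup spanned by `{0} ∪ [S]⁴` and a constant `a ∈ H`. -/
theorem bohr_straightening_boolean (κ H : Type*) [AddCommGroup H]
    (hκ : (2 : Cardinal) ^ ((2 : Cardinal) ^ Cardinal.continuum) < Cardinal.mk κ) :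
    letI := bohrTopology (κ →₀ ZMod 2)
    letI := bohrTopology H
    ∀ f : (zeroUnionQuadruples (Set.univ : Set κ)) → H,
      Continuous f →
        ∃ S : Set κ, S.Infinite ∧
          ∃ (h : (AddSubgroup.closure (zeroUnionQuadruples S)) →+ H) (a : H),
            ∀ (x : zeroUnionQuadruples (Set.univ : Set κ))
              (hx : (x : κ →₀ ZMod 2) ∈ zeroUnionQuadruples S),
              f x = h ⟨↑x, AddSubgroup.subset_closure hx⟩ + a := by
  intro f hf
  let _ := bohrTopology (κ →₀ ZMod 2)
  let _ := bohrTopology H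
  exact bohr_straightening_boolean_general (r := 4) κ H (by decide) le_rfl
    (by simpa using hκ) f hf.continuousAt
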